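/- arXiv:1907.07513 — 3 statements merged into one kernel-verified Lean document; each statement's English description precedes it below -/
import Mathlib

section
/- Let G = (V,E) be a Δ-regular finite simple graph, let τ ∈ (0,1), let A be a set of agents with |A| = |V| partitioned into k ≥ 2 types, and consider the one-versus-all swap Schelling game (1-k-SSG) with bijective placements. Then the function Φ(p) = (1/2)·∑_{a∈A} |N⁻_p(a)| (equal to the number of edges of G whose two endpoints are occupied by agents of different types under p) strictly decreases by at least 1 with every improving swap; consequently every sequence of improving swaps has length at most |E|, and improving response dynamics always reach a swap-stable placement in O(|E|) moves. -/
/-!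
In a `Δ`-regular graph with all nodes occupied, every agent has exactly `Δ` neighbors, so its cost
can only drop if its number of neighbors of other types drops. A swap of `a` and `b` changes the
status of no edge between two other agents and leaves the edge between `a` and `b`, if there is
one, with the same two agents, so `Φ` changes by exactly the sum of the changes of `|N⁻(a)|` and
`|N⁻(b)|`. Each of these is at most `-1` in an improving swap, so `Φ` drops by at least `2`.
-/

open Finset
open scoped Classical

noncomputable section

namespace Schelling

variable {V A : Type*} [Fintype V] [Fintype A] {k : ℕ}

/-- The set of neighbors of agent `a` under placement `p`. -/
def nbrs (G : SimpleGraph V) (p : A → V) (a : A) : Finset A :=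
  Finset.univ.filter fun b => G.Adj (p a) (p b)

/-- `|N⁺_p(a)|`: the number of neighbors of `a` under `p` having the same type as `a`. -/
def posCount (G : SimpleGraph V) (t : A → Fin k) (p : A → V) (a : A) : ℕ :=
  (Finset.univ.filter fun b => G.Adj (p a) (p b) ∧ t b = t a).card

/-- One-versus-all `|N⁻_p(a)|`: the number of neighbors of `a` whose type differs from `t a`. -/
def negCountAll (G : SimpleGraph V) (t : A → Fin k) (p : A → V) (a : A) : ℕ :=
  (Finset.univ.filter fun b => G.Adj (p a) (p b) ∧ t b ≠ t a).card

/-- One-versus-one `|N⁻_p(a)|`: the size of a largest set of neighbors of `a`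
of one common type different from `t a`. -/
def negCountOne (G : SimpleGraph V) (t : A → Fin k) (p : A → V) (a : A) : ℕ :=
  (Finset.univ.filter fun T : Fin k => T ≠ t a).sup fun T =>
    (Finset.univ.filter fun b => G.Adj (p a) (p b) ∧ t b = T).card

/-- The cost of agent `a` in the one-versus-all version. -/
def costAll (G : SimpleGraph V) (t : A → Fin k) (τ : ℝ) (p : A → V) (a : A) : ℝ :=
  if nbrs G p a = ∅ then τ
  else max 0 (τ - (posCount G t p a : ℝ) /
    ((posCount G t p a : ℝ) + (negCountAll G t p a : ℝ)))

/-- The cost of agent `a` in the one-versus-one version. -/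
def costOne (G : SimpleGraph V) (t : A → Fin k) (τ : ℝ) (p : A → V) (a : A) : ℝ :=
  if nbrs G p a = ∅ then τ
  else max 0 (τ - (posCount G t p a : ℝ) /
    ((posCount G t p a : ℝ) + (negCountOne G t p a : ℝ)))

/-- A swap of the (distinct) agents `a` and `b` turning placement `p` into `q`,
which strictly decreases the cost of both agents (cost function `c`). -/
def SwapMove (c : (A → V) → A → ℝ) (p q : A → V) (a b : A) : Prop :=
  a ≠ b ∧ q = p ∘ (Equiv.swap a b) ∧ c q a < c p a ∧ c q b < c p b

/-- `q` is obtained from `p` by an improving swap. -/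
def ImprovingSwap (c : (A → V) → A → ℝ) (p q : A → V) : Prop :=
  ∃ a b, SwapMove c p q a b

/-- A placement is swap-stable if it admits no improving swap. -/
def SwapStable (c : (A → V) → A → ℝ) (p : A → V) : Prop :=
  ∀ q, ¬ ImprovingSwap c p q

/-- Some finite sequence of improving swaps starting at `p₀` ends in a swap-stable placement. -/
def ReachesStableSwap (c : (A → V) → A → ℝ) (p₀ : A → V) : Prop :=
  ∃ (n : ℕ) (q : ℕ → A → V), q 0 = p₀ ∧
    (∀ i < n, ImprovingSwap c (q i) (q (i + 1))) ∧ SwapStable c (q n)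

/-- A jump of agent `a` to the node `v` (unoccupied under `p`) turning placement `p`
into `q`, which strictly decreases the cost of `a` (cost function `c`). -/
def JumpMove (c : (A → V) → A → ℝ) (p q : A → V) (a : A) (v : V) : Prop :=
  (∀ b, p b ≠ v) ∧ q = Function.update p a v ∧ c q a < c p a

/-- `q` is obtained from `p` by an improving jump. -/
def ImprovingJump (c : (A → V) → A → ℝ) (p q : A → V) : Prop :=
  ∃ a v, JumpMove c p q a v

/-- A placement is jump-stable if it admits no improving jump. -/
def JumpStable (c : (A → V) → A → ℝ) (p : A → V) : Prop :=
  ∀ q, ¬ ImprovingJump c p q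

/-- Some finite sequence of improving jumps starting at `p₀` ends in a jump-stable placement. -/
def ReachesStableJump (c : (A → V) → A → ℝ) (p₀ : A → V) : Prop :=
  ∃ (n : ℕ) (q : ℕ → A → V), q 0 = p₀ ∧
    (∀ i < n, ImprovingJump c (q i) (q (i + 1))) ∧ JumpStable c (q n)

/-- The placement cost: the number of discontent agents (one-versus-all cost). -/
def placementCost (G : SimpleGraph V) (t : A → Fin k) (τ : ℝ) (p : A → V) : ℕ :=
  (Finset.univ.filter fun a => costAll G t τ p a ≠ 0).card

/-- A graph is `Δ`-regular if every node has exactly `Δ` neighbors. -/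
def IsRegular (G : SimpleGraph V) (Δ : ℕ) : Prop :=
  ∀ v : V, (Finset.univ.filter fun u => G.Adj v u).card = Δ

/-- The potential `Φ(p) = (1/2) ∑_{a ∈ A} |N⁻_p(a)|` (one-versus-all version). -/
def PhiSwap (G : SimpleGraph V) (t : A → Fin k) (p : A → V) : ℝ :=
  (∑ a : A, (negCountAll G t p a : ℝ)) / 2

/-- An edge whose two endpoints are occupied by agents of different types under `p`. -/
def DiffEdge (t : A → Fin k) (p : A → V) (e : Sym2 V) : Prop :=
  ∃ a b : A, t a ≠ t b ∧ e = s(p a, p b)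

section DoubleSum

variable {ι M : Type*} [Fintype ι] [AddCommMonoid M]

lemma sum_sum_eq_two_nsmul_of_cut {D : ι → ι → M} (hsymm : ∀ x y, D x y = D y x)
    {s : Finset ι} (hcut : ∀ x y, (x ∈ s ↔ y ∈ s) → D x y = 0) :
    ∑ x, ∑ y, D x y = 2 • ∑ x ∈ s, ∑ y, D x y := by
  have sum_inside : ∀ x ∈ s, ∑ y ∈ sᶜ, D x y = ∑ y, D x y := fun x hx => by
    rw [← sum_add_sum_compl s (D x), sum_eq_zero fun y hy => hcut x y (iff_of_true hx hy),
      zero_add]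
  have sum_outside : ∀ x ∈ sᶜ, ∑ y ∈ s, D x y = ∑ y, D x y := fun x hx => by
    rw [← sum_add_sum_compl s (D x), sum_eq_zero (s := sᶜ) fun y hy =>
      hcut x y (iff_of_false (mem_compl.1 hx) (mem_compl.1 hy)), add_zero]
  have sum_compl : ∑ x ∈ sᶜ, ∑ y, D x y = ∑ x ∈ s, ∑ y, D x y :=
    calc ∑ x ∈ sᶜ, ∑ y, D x y = ∑ x ∈ sᶜ, ∑ y ∈ s, D x y :=
          (sum_congr rfl sum_outside).symm
      _ = ∑ y ∈ s, ∑ x ∈ sᶜ, D y x := by simp_rw [sum_comm (s := sᶜ), hsymm]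
      _ = ∑ x ∈ s, ∑ y, D x y := sum_congr rfl sum_inside
  rw [← sum_add_sum_compl s, sum_compl, two_nsmul]

end DoubleSum

section Placement

omit [Fintype V]

lemma posCount_add_negCountAll (G : SimpleGraph V) (t : A → Fin k) (p : A → V) (a : A) :
    posCount G t p a + negCountAll G t p a = (nbrs G p a).card := by
  rw [← card_filter_add_card_filter_not (s := nbrs G p a) (fun b => t b = t a)]
  simp only [nbrs, filter_filter, posCount, negCountAll, ne_eq]

lemma costAll_le_costAll {G : SimpleGraph V} {t : A → Fin k} {τ : ℝ} {p q : A → V} {a b : A}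
    (hcard : (nbrs G p a).card = (nbrs G q b).card) (hpos : posCount G t p a ≤ posCount G t q b) :
    costAll G t τ q b ≤ costAll G t τ p a := by
  have hempty : nbrs G p a = ∅ ↔ nbrs G q b = ∅ := by simp only [← card_eq_zero, hcard]
  simp only [costAll, ← Nat.cast_add, posCount_add_negCountAll, hempty, hcard]
  split_ifs
  · exact le_rfl
  · gcongr

lemma negCountAll_lt_of_costAll_lt {G : SimpleGraph V} {t : A → Fin k} {τ : ℝ} {p q : A → V}
    {a b : A} (hcard : (nbrs G p a).card = (nbrs G q b).card)
    (hcost : costAll G t τ q b < costAll G t τ p a) :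
    negCountAll G t q b < negCountAll G t p a := by
  have hpos : posCount G t p a < posCount G t q b :=
    lt_of_not_ge fun h => hcost.not_ge (costAll_le_costAll hcard.symm h)
  have hp := posCount_add_negCountAll G t p a
  have hq := posCount_add_negCountAll G t q b
  omega

lemma negCountAll_eq_sum (G : SimpleGraph V) (t : A → Fin k) (p : A → V) (a : A) :
    (negCountAll G t p a : ℝ) = ∑ b, if G.Adj (p a) (p b) ∧ t b ≠ t a then 1 else 0 :=
  (sum_boole _ _).symm

omit [Fintype A] in
lemma adj_comp_swap_iff {G : SimpleGraph V} {p : A → V} {a b x y : A}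
    (hxy : x ∈ ({a, b} : Finset A) ↔ y ∈ ({a, b} : Finset A)) :
    G.Adj ((p ∘ Equiv.swap a b) x) ((p ∘ Equiv.swap a b) y) ↔ G.Adj (p x) (p y) := by
  simp only [mem_insert, mem_singleton] at hxy
  simp only [Function.comp_apply, Equiv.swap_apply_def]
  grind [G.adj_comm, SimpleGraph.irrefl]

lemma PhiSwap_comp_swap_sub (G : SimpleGraph V) (t : A → Fin k) (p : A → V) {a b : A}
    (hab : a ≠ b) :
    PhiSwap G t (p ∘ Equiv.swap a b) - PhiSwap G t p =
      ((negCountAll G t (p ∘ Equiv.swap a b) a : ℝ) - negCountAll G t p a) +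
        ((negCountAll G t (p ∘ Equiv.swap a b) b : ℝ) - negCountAll G t p b) := by
  let F (r : A → V) (x y : A) : ℝ := if G.Adj (r x) (r y) ∧ t y ≠ t x then 1 else 0
  let D (x y : A) : ℝ := F (p ∘ Equiv.swap a b) x y - F p x y
  have F_symm : ∀ r x y, F r x y = F r y x := fun r x y => by
    simp only [F, G.adj_comm (r x), ne_comm (a := t y)]
  have D_symm : ∀ x y, D x y = D y x := fun x y => by
    simp only [D, F_symm _ x y]
  have D_cut : ∀ x y, (x ∈ ({a, b} : Finset A) ↔ y ∈ ({a, b} : Finset A)) → D x y = 0 :=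
    fun x y hxy => by simp only [D, F, adj_comp_swap_iff hxy, sub_self]
  have sum_D : ∀ x, ∑ y, D x y =
      (negCountAll G t (p ∘ Equiv.swap a b) x : ℝ) - negCountAll G t p x := fun x => by
    simp only [D, F, sum_sub_distrib, negCountAll_eq_sum]
  have double_sum := sum_sum_eq_two_nsmul_of_cut D_symm D_cut
  simp only [sum_pair hab, sum_D, sum_sub_distrib, nsmul_eq_mul, Nat.cast_ofNat] at double_sum
  simp only [PhiSwap]
  linarith

lemma PhiSwap_nonneg (G : SimpleGraph V) (t : A → Fin k) (p : A → V) : 0 ≤ PhiSwap G t p := by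
  unfold PhiSwap
  positivity

/-- The graph on the agents that joins neighbors under `p` of different types; its degrees are the
numbers `|N⁻_p(a)|`, so that the handshake lemma computes `Φ(p)`. -/
def diffGraph (G : SimpleGraph V) (t : A → Fin k) (p : A → V) : SimpleGraph A :=
  G.comap p ⊓ (⊤ : SimpleGraph (Fin k)).comap t

lemma degree_diffGraph (G : SimpleGraph V) (t : A → Fin k) (p : A → V) (a : A) :
    (diffGraph G t p).degree a = negCountAll G t p a := by
  rw [← SimpleGraph.card_neighborFinset_eq_degree, SimpleGraph.neighborFinset_eq_filter]
  simp only [diffGraph, negCountAll, SimpleGraph.inf_adj, SimpleGraph.comap_adj,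
    SimpleGraph.top_adj, ne_comm]

lemma PhiSwap_eq_card_edgeFinset_diffGraph (G : SimpleGraph V) (t : A → Fin k) (p : A → V) :
    PhiSwap G t p = (diffGraph G t p).edgeFinset.card := by
  have handshake := (diffGraph G t p).sum_degrees_eq_twice_card_edges
  simp only [degree_diffGraph] at handshake
  rw [PhiSwap, ← Nat.cast_sum, handshake]
  push_cast
  ring

omit [Fintype A] in
lemma image_edgeSet_diffGraph (G : SimpleGraph V) (t : A → Fin k) (p : A → V) :
    Sym2.map p '' (diffGraph G t p).edgeSet = {e ∈ G.edgeSet | DiffEdge t p e} := by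
  ext e
  constructor
  · rintro ⟨⟨a, b⟩, ⟨hadj, htype⟩, rfl⟩
    exact ⟨hadj, a, b, htype, rfl⟩
  · rintro ⟨hadj, a, b, htype, rfl⟩
    exact ⟨s(a, b), ⟨hadj, htype⟩, rfl⟩

lemma PhiSwap_eq_ncard_diffEdge (G : SimpleGraph V) (t : A → Fin k) {p : A → V}
    (hp : Function.Injective p) :
    PhiSwap G t p = (({e ∈ G.edgeSet | DiffEdge t p e}).ncard : ℝ) := by
  rw [PhiSwap_eq_card_edgeFinset_diffGraph, ← image_edgeSet_diffGraph,
    Set.ncard_image_of_injective _ (Sym2.map.injective hp), ← SimpleGraph.coe_edgeFinset,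
    Set.ncard_coe_finset]

lemma PhiSwap_le_ncard_edgeSet [Finite V] (G : SimpleGraph V) (t : A → Fin k) {p : A → V}
    (hp : Function.Injective p) : PhiSwap G t p ≤ G.edgeSet.ncard := by
  rw [PhiSwap_eq_ncard_diffEdge G t hp]
  exact_mod_cast Set.ncard_le_ncard (Set.sep_subset _ _) (Set.toFinite _)

omit [Fintype A] in
lemma ImprovingSwap.bijective {c : (A → V) → A → ℝ} {p q : A → V} (h : ImprovingSwap c p q)
    (hp : Function.Bijective p) : Function.Bijective q := by
  obtain ⟨a, b, -, rfl, -⟩ := h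
  exact hp.comp (Equiv.swap a b).bijective

omit [Fintype A] in
lemma SwapStable.reachesStableSwap {c : (A → V) → A → ℝ} {p : A → V} (h : SwapStable c p) :
    ReachesStableSwap c p :=
  ⟨0, fun _ => p, rfl, by simp, h⟩

omit [Fintype A] in
lemma ImprovingSwap.reachesStableSwap {c : (A → V) → A → ℝ} {p q : A → V}
    (h : ImprovingSwap c p q) (hq : ReachesStableSwap c q) : ReachesStableSwap c p := by
  obtain ⟨n, seq, rfl, hseq, hstable⟩ := hq
  refine ⟨n + 1, fun | 0 => p | i + 1 => seq i, rfl, fun i hi => ?_, hstable⟩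
  cases i with
  | zero => exact h
  | succ i => exact hseq i (Nat.lt_of_succ_lt_succ hi)

omit [Fintype A] in
lemma reachesStableSwap_of_potential {β : Type*} [Preorder β] [WellFoundedLT β]
    {c : (A → V) → A → ℝ} {I : (A → V) → Prop} (Φ : (A → V) → β)
    (hI : ∀ p q, I p → ImprovingSwap c p q → I q)
    (hΦ : ∀ p q, I p → ImprovingSwap c p q → Φ q < Φ p) (p : A → V) (hp : I p) :
    ReachesStableSwap c p := by
  induction p using (InvImage.wf Φ wellFounded_lt).induction with
  | _ p ih =>
    by_cases hstable : SwapStable c p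
    · exact hstable.reachesStableSwap
    · obtain ⟨q, hq⟩ : ∃ q, ImprovingSwap c p q := by simpa [SwapStable] using hstable
      exact hq.reachesStableSwap (ih q (hΦ p q hp hq) (hI p q hp hq))

end Placement

section Regular

variable {G : SimpleGraph V} {Δ : ℕ} {t : A → Fin k} {τ : ℝ}

lemma IsRegular.card_nbrs (hreg : IsRegular G Δ) {p : A → V} (hp : Function.Bijective p) (a : A) :
    (nbrs G p a).card = Δ := by
  rw [← hreg (p a)]
  exact card_bijective p hp fun b => by simp only [nbrs, mem_filter_univ]

lemma IsRegular.PhiSwap_add_two_le (hreg : IsRegular G Δ) {p q : A → V}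
    (hp : Function.Bijective p) (h : ImprovingSwap (costAll G t τ) p q) :
    PhiSwap G t q + 2 ≤ PhiSwap G t p := by
  have hq := h.bijective hp
  have negCountAll_succ_le : ∀ x, costAll G t τ q x < costAll G t τ p x →
      (negCountAll G t q x : ℝ) + 1 ≤ negCountAll G t p x := fun x hx => by
    exact_mod_cast negCountAll_lt_of_costAll_lt
      ((hreg.card_nbrs hp x).trans (hreg.card_nbrs hq x).symm) hx
  obtain ⟨a, b, hab, rfl, ha, hb⟩ := h
  linarith [PhiSwap_comp_swap_sub G t p hab, negCountAll_succ_le a ha, negCountAll_succ_le b hb]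

lemma IsRegular.PhiSwap_add_two_mul_le (hreg : IsRegular G Δ) {n : ℕ} {seq : ℕ → A → V}
    (h0 : Function.Bijective (seq 0))
    (hseq : ∀ i < n, ImprovingSwap (costAll G t τ) (seq i) (seq (i + 1))) :
    PhiSwap G t (seq n) + 2 * n ≤ PhiSwap G t (seq 0) := by
  suffices h : Function.Bijective (seq n) ∧ PhiSwap G t (seq n) + 2 * n ≤ PhiSwap G t (seq 0) from
    h.2
  induction n with
  | zero => exact ⟨h0, by simp⟩
  | succ n ih =>
    obtain ⟨hbij, hle⟩ := ih fun i hi => hseq i (hi.trans n.lt_succ_self)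
    have hswap := hseq n n.lt_succ_self
    refine ⟨hswap.bijective hbij, ?_⟩
    push_cast
    linarith [hreg.PhiSwap_add_two_le hbij hswap]

lemma IsRegular.two_mul_length_le (hreg : IsRegular G Δ) {n : ℕ} {seq : ℕ → A → V}
    (h0 : Function.Bijective (seq 0))
    (hseq : ∀ i < n, ImprovingSwap (costAll G t τ) (seq i) (seq (i + 1))) :
    2 * n ≤ G.edgeSet.ncard := by
  have : (2 * n : ℝ) ≤ G.edgeSet.ncard := by
    linarith [hreg.PhiSwap_add_two_mul_le h0 hseq, PhiSwap_nonneg G t (seq n),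
      PhiSwap_le_ncard_edgeSet G t h0.injective]
  exact_mod_cast this

lemma IsRegular.reachesStableSwap (hreg : IsRegular G Δ) {p : A → V} (hp : Function.Bijective p) :
    ReachesStableSwap (costAll G t τ) p := by
  refine reachesStableSwap_of_potential (I := Function.Bijective)
    (fun r => ∑ a, negCountAll G t r a) (fun p q hp h => h.bijective hp) (fun p q hp h => ?_) p hp
  have hlt := hreg.PhiSwap_add_two_le hp h
  simp only [PhiSwap, ← Nat.cast_sum] at hlt
  have : ((∑ a, negCountAll G t q a : ℕ) : ℝ) < (∑ a, negCountAll G t p a : ℕ) := by linarith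
  exact_mod_cast this

end Regular

theorem statement1_general (G : SimpleGraph V) (Δ : ℕ) (hreg : IsRegular G Δ) (t : A → Fin k)
    (τ : ℝ) :
    (∀ p : A → V, Function.Bijective p →
        PhiSwap G t p = (({e ∈ G.edgeSet | DiffEdge t p e}).ncard : ℝ)) ∧
    (∀ p q : A → V, Function.Bijective p → ImprovingSwap (costAll G t τ) p q →
        PhiSwap G t q + 2 ≤ PhiSwap G t p) ∧
    (∀ (n : ℕ) (seq : ℕ → A → V), Function.Bijective (seq 0) →
        (∀ i < n, ImprovingSwap (costAll G t τ) (seq i) (seq (i + 1))) →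
        2 * n ≤ G.edgeSet.ncard) ∧
    (∀ p₀ : A → V, Function.Bijective p₀ → ReachesStableSwap (costAll G t τ) p₀) :=
  ⟨fun _ hp => PhiSwap_eq_ncard_diffEdge G t hp.injective,
    fun _ _ hp h => hreg.PhiSwap_add_two_le hp h,
    fun _ _ h0 hseq => hreg.two_mul_length_le h0 hseq,
    fun _ hp => hreg.reachesStableSwap hp⟩

/-- On a `Δ`-regular graph, for the `1`-`k`-SSG, `Φ(p) = (1/2)∑_a |N⁻_p(a)|` equals the
number of bichromatic edges, strictly decreases by at least `1` with every improving swap,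
every sequence of improving swaps has length at most `|E|`, and IRD always reach a
swap-stable placement. -/
theorem statement1 {V A : Type*} [Fintype V] [Fintype A] {k : ℕ}
    (G : SimpleGraph V) (Δ : ℕ) (hreg : IsRegular G Δ)
    (hk : 2 ≤ k) (t : A → Fin k) (ht : Function.Surjective t)
    (hcard : Fintype.card A = Fintype.card V)
    (τ : ℝ) (hτ0 : 0 < τ) (hτ1 : τ < 1) :
    (∀ p : A → V, Function.Bijective p →
        PhiSwap G t p = (({e ∈ G.edgeSet | DiffEdge t p e}).ncard : ℝ)) ∧
    (∀ p q : A → V, Function.Bijective p → ImprovingSwap (costAll G t τ) p q →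
        PhiSwap G t q + 1 ≤ PhiSwap G t p) ∧
    (∀ (n : ℕ) (seq : ℕ → A → V), Function.Bijective (seq 0) →
        (∀ i < n, ImprovingSwap (costAll G t τ) (seq i) (seq (i + 1))) →
        n ≤ G.edgeSet.ncard) ∧
    (∀ p₀ : A → V, Function.Bijective p₀ → ReachesStableSwap (costAll G t τ) p₀) := by
  obtain ⟨phi_eq, phi_drop, length_le, reaches⟩ := statement1_general G Δ hreg t τ
  exact ⟨phi_eq, fun p q hp h => by linarith [phi_drop p q hp h],
    fun n seq h0 h => by linarith [length_le n seq h0 h], reaches⟩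

end Schelling
end
end

section
/- For every integer Δ ≥ 3 and every intolerance parameter τ with 2/Δ < τ < 1, there exist a Δ-regular finite simple graph G = (V,E), a set A of agents with |A| < |V| partitioned into two types, and an improving response cycle for the one-versus-one jump Schelling game (1-1-JSG) with parameter τ on G; in particular, improving response dynamics may not converge in the 1-1-JSG for τ > 2/Δ on Δ-regular graphs. -/
open Finset
open scoped Classical

noncomputable section

namespace Schelling

variable {V A : Type*} [Fintype V] [Fintype A] {k : ℕ}

/-!
Take the path `0 - 1 - 2 - 3` and join its two middle nodes to a common independent set of `Δ - 2`
blue agents; three red agents move on the path, so exactly one path node is empty. A red agent alone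
at an end has no neighbor and improves by jumping to the empty node next to it, where it meets
another red agent. Then the red agent in the middle of the red path sees `2` red and `Δ - 2` blue
agents, and improves by jumping to the vacated end, where its single neighbor is red. These two
jumps reflect the path and rotate the red agents, so six rounds close a cycle. As all degrees are at
most `Δ`, the configuration is an induced subgraph of a `Δ`-regular graph, whose additional nodes
stay empty and do not affect any cost.
-/

section Regularization

variable {V ι : Type*}

/-- The graph on `V × Finset ι` that consists of one copy of `G` for each vertex of the hypercube
`Finset ι`, where `(v, S)` is also joined to its copies `(v, S ∆ {i})` in the directions `i ∈ D v`.
It serves to raise the degree of each node `v` of `G` by the prescribed amount `#(D v)`. -/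
def cubeExtension (G : SimpleGraph V) (D : V → Finset ι) : SimpleGraph (V × Finset ι) where
  Adj x y := (G.Adj x.1 y.1 ∧ x.2 = y.2) ∨ (x.1 = y.1 ∧ ∃ i ∈ D x.1, y.2 = symmDiff x.2 {i})
  symm := ⟨by
    rintro ⟨u, S⟩ ⟨v, T⟩ (⟨huv, hST⟩ | ⟨huv, i, hi, hT⟩)
    · exact .inl ⟨huv.symm, hST.symm⟩
    · dsimp only at huv hi hT
      subst huv hT
      exact .inr ⟨rfl, i, hi, (symmDiff_symmDiff_cancel_right _ _).symm⟩⟩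
  loopless := ⟨by
    rintro ⟨u, S⟩ (⟨huu, -⟩ | ⟨-, i, -, hS⟩)
    · exact G.irrefl huu
    · exact singleton_ne_empty i (symmDiff_eq_left.1 hS.symm)⟩

@[simp]
lemma cubeExtension_adj {G : SimpleGraph V} {D : V → Finset ι} {u v : V} {S T : Finset ι} :
    (cubeExtension G D).Adj (u, S) (v, T) ↔
      (G.Adj u v ∧ S = T) ∨ (u = v ∧ ∃ i ∈ D u, T = symmDiff S {i}) :=
  Iff.rfl

/-- `G` sits in its cube extension as the copy over `∅`. -/
def embeddingCubeExtension (G : SimpleGraph V) (D : V → Finset ι) : G ↪g cubeExtension G D where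
  toFun v := (v, ∅)
  inj' _ _ h := congrArg Prod.fst h
  map_rel_iff' := by
    intro u v
    change (cubeExtension G D).Adj (u, ∅) (v, ∅) ↔ G.Adj u v
    simp [eq_comm (a := (∅ : Finset ι))]

lemma degree_cubeExtension [Fintype V] [Fintype ι] (G : SimpleGraph V) (D : V → Finset ι) (v : V)
    (S : Finset ι) : (cubeExtension G D).degree (v, S) = G.degree v + #(D v) := by
  have hneighbors : (cubeExtension G D).neighborFinset (v, S) =
      (G.neighborFinset v).image (·, S) ∪ (D v).image (fun i ↦ (v, symmDiff S {i})) := by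
    ext ⟨w, T⟩
    simp only [SimpleGraph.mem_neighborFinset, cubeExtension_adj, mem_union, mem_image,
      Prod.mk.injEq]
    grind
  rw [← SimpleGraph.card_neighborFinset_eq_degree, hneighbors, card_union_of_disjoint,
    card_image_of_injective _ (Prod.mk_left_injective S), card_image_of_injective,
    SimpleGraph.card_neighborFinset_eq_degree]
  · exact (Prod.mk_right_injective v).comp
      ((symmDiff_right_injective S).comp singleton_injective)
  · simp [disjoint_left]

lemma isRegular_iff_degree_eq [Fintype V] {G : SimpleGraph V} {Δ : ℕ} :
    IsRegular G Δ ↔ ∀ v, G.degree v = Δ := by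
  simp only [IsRegular, ← SimpleGraph.card_neighborFinset_eq_degree,
    SimpleGraph.neighborFinset_eq_filter]

lemma exists_isRegular_embedding [Fintype V] (G : SimpleGraph V) {Δ : ℕ}
    (hdeg : ∀ v, G.degree v ≤ Δ) :
    ∃ (N : ℕ) (H : SimpleGraph (Fin N)), IsRegular H Δ ∧ Nonempty (G ↪g H) := by
  have hD (v : V) : ∃ D : Finset (Fin Δ), #D = Δ - G.degree v := by
    obtain ⟨D, -, hcard⟩ := exists_subset_card_eq (s := (univ : Finset (Fin Δ)))
      (n := Δ - G.degree v) (by simp)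
    exact ⟨D, hcard⟩
  choose D hcard using hD
  let e := (cubeExtension G D).overFinIso rfl
  refine ⟨_, _, isRegular_iff_degree_eq.2 fun x ↦ ?_,
    ⟨e.toEmbedding.comp (embeddingCubeExtension G D)⟩⟩
  obtain ⟨⟨v, S⟩, rfl⟩ := e.surjective x
  rw [e.degree_eq, degree_cubeExtension, hcard, Nat.add_sub_cancel' (hdeg v)]

end Regularization

section Cost

variable {V A : Type*} [Fintype A] {k : ℕ} {G : SimpleGraph V} {t : A → Fin k} {τ : ℝ}
  {p q : A → V} {a : A}

/-- The fraction `|N⁺_p(a)| / (|N⁺_p(a)| + |N⁻_p(a)|)` of the one-versus-one version. An agent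
without neighbors has fraction `0 / 0 = 0`, in accordance with its cost `τ = τ - 0`. -/
def positiveFraction (G : SimpleGraph V) (t : A → Fin k) (p : A → V) (a : A) : ℝ :=
  posCount G t p a / (posCount G t p a + negCountOne G t p a)

lemma positiveFraction_nonneg : 0 ≤ positiveFraction G t p a := by
  unfold positiveFraction
  positivity

lemma costOne_eq_max (hτ : 0 ≤ τ) : costOne G t τ p a = max 0 (τ - positiveFraction G t p a) := by
  unfold costOne
  split_ifs with hnbrs
  · have hpos : posCount G t p a = 0 :=
      card_eq_zero.2 <| filter_eq_empty_iff.2 fun b hb hadj ↦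
        filter_eq_empty_iff.1 hnbrs hb hadj.1
    simp [positiveFraction, hpos, hτ]
  · rfl

lemma costOne_lt_costOne (hdiscontent : positiveFraction G t p a < τ)
    (hlt : positiveFraction G t p a < positiveFraction G t q a) :
    costOne G t τ q a < costOne G t τ p a := by
  have hτ : 0 ≤ τ := positiveFraction_nonneg.trans hdiscontent.le
  rw [costOne_eq_max hτ, costOne_eq_max hτ]
  exact max_lt (lt_max_of_lt_right (sub_pos.2 hdiscontent))
    (lt_max_of_lt_right (sub_lt_sub_left hlt τ))

lemma negCountOne_eq_negCountAll (G : SimpleGraph V) (t : A → Fin 2) (p : A → V) (a : A) :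
    negCountOne G t p a = negCountAll G t p a := by
  have eq_rev_iff : ∀ S T : Fin 2, T = S.rev ↔ T ≠ S := by decide
  have hother : (univ.filter fun T ↦ T ≠ t a) = {(t a).rev} := by
    ext T
    simp [eq_rev_iff]
  simp only [negCountOne, negCountAll, hother, sup_singleton, eq_rev_iff]

end Cost

section Jump

variable {V A : Type*} {c : (A → V) → A → ℝ}

lemma improvingJump_of_forall_ne {p q : A → V} {a : A} (hfree : ∀ b, p b ≠ q a)
    (heq : ∀ b ≠ a, q b = p b) (hlt : c q a < c p a) : ImprovingJump c p q :=
  ⟨a, q a, hfree, Function.eq_update_iff.2 ⟨rfl, heq⟩, hlt⟩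

/-- An improving response cycle: `q 0, …, q ℓ` are placements with `q ℓ = q 0`, each obtained from
the previous one by a jump that improves the cost `c`. Injectivity is required of `q 0` only, as a
jump to an unoccupied node preserves it. -/
def IsImprovingResponseCycle (c : (A → V) → A → ℝ) (ℓ : ℕ) (q : ℕ → A → V) : Prop :=
  1 ≤ ℓ ∧ Function.Injective (q 0) ∧ q ℓ = q 0 ∧ ∀ i < ℓ, ImprovingJump c (q i) (q (i + 1))

lemma IsImprovingResponseCycle.card_lt [Fintype A] [Fintype V] {ℓ : ℕ} {q : ℕ → A → V}
    (h : IsImprovingResponseCycle c ℓ q) : Fintype.card A < Fintype.card V := by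
  obtain ⟨hℓ, hinj, -, hjump⟩ := h
  obtain ⟨a, v, hfree, -⟩ := hjump 0 hℓ
  exact Fintype.card_lt_of_injective_of_notMem _ hinj fun ⟨b, hb⟩ ↦ hfree b hb

end Jump

section Transport

variable {V W A B : Type*} [Fintype A] [Fintype B] {k : ℕ} {G : SimpleGraph V}
  {H : SimpleGraph W} {t : A → Fin k} {τ : ℝ} {p q : A → V}

lemma costOne_comp (φ : G ↪g H) (e : B ≃ A) (t : A → Fin k) (τ : ℝ) (p : A → V) (b : B) :
    costOne H (t ∘ e) τ (φ ∘ p ∘ e) b = costOne G t τ p (e b) := by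
  have hcard (T : Fin k) : #{c | H.Adj ((φ ∘ p ∘ e) b) ((φ ∘ p ∘ e) c) ∧ (t ∘ e) c = T} =
      #{c | G.Adj (p (e b)) (p c) ∧ t c = T} :=
    card_equiv e fun c ↦ by simp
  have hpos : posCount H (t ∘ e) (φ ∘ p ∘ e) b = posCount G t p (e b) := hcard _
  have hneg : negCountOne H (t ∘ e) (φ ∘ p ∘ e) b = negCountOne G t p (e b) := by
    simp only [negCountOne, hcard]
    rfl
  have hnbrs : nbrs H (φ ∘ p ∘ e) b = ∅ ↔ nbrs G p (e b) = ∅ := by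
    simp [nbrs, filter_eq_empty_iff, e.surjective.forall]
  simp only [costOne, hpos, hneg, hnbrs]

lemma ImprovingJump.comp (φ : G ↪g H) (e : B ≃ A) (h : ImprovingJump (costOne G t τ) p q) :
    ImprovingJump (costOne H (t ∘ e) τ) (φ ∘ p ∘ e) (φ ∘ q ∘ e) := by
  obtain ⟨a, v, hfree, hq, hlt⟩ := h
  refine ⟨e.symm a, φ v, fun b hb ↦ hfree (e b) (φ.injective hb), ?_, ?_⟩
  · rw [hq, Function.update_comp_equiv, Function.comp_update]
  · simpa only [costOne_comp, Equiv.apply_symm_apply] using hlt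

lemma IsImprovingResponseCycle.comp {ℓ : ℕ} {q : ℕ → A → V} (φ : G ↪g H) (e : B ≃ A)
    (h : IsImprovingResponseCycle (costOne G t τ) ℓ q) :
    IsImprovingResponseCycle (costOne H (t ∘ e) τ) ℓ (fun i ↦ φ ∘ q i ∘ e) := by
  obtain ⟨hℓ, hinj, hclosed, hjump⟩ := h
  exact ⟨hℓ, φ.injective.comp (hinj.comp e.injective), by simp only [hclosed],
    fun i hi ↦ (hjump i hi).comp φ e⟩

end Transport

section Gadget

variable {L : Type*}

/-- The path `0 - 1 - 2 - 3` together with an independent set `L` of nodes, each of which is joined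
to the two middle nodes of the path. -/
def gadget (L : Type*) : SimpleGraph (Fin 4 ⊕ L) where
  Adj
    | .inl x, .inl y => (SimpleGraph.pathGraph 4).Adj x y
    | .inl x, .inr _ | .inr _, .inl x => x = 1 ∨ x = 2
    | .inr _, .inr _ => False
  symm := ⟨by
    rintro (x | l) (y | m) h
    exacts [h.symm, h, h, h]⟩
  loopless := ⟨by
    rintro (x | l) h
    exacts [SimpleGraph.irrefl _ h, h]⟩

@[simp]
lemma gadget_adj_inl_inl {x y : Fin 4} :
    (gadget L).Adj (.inl x) (.inl y) ↔ x.val + 1 = y.val ∨ y.val + 1 = x.val :=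
  SimpleGraph.pathGraph_adj

@[simp]
lemma gadget_adj_inl_inr {x : Fin 4} {l : L} :
    (gadget L).Adj (.inl x) (.inr l) ↔ x = 1 ∨ x = 2 :=
  Iff.rfl

@[simp]
lemma gadget_adj_inr_inl {x : Fin 4} {l : L} :
    (gadget L).Adj (.inr l) (.inl x) ↔ x = 1 ∨ x = 2 :=
  Iff.rfl

@[simp]
lemma not_gadget_adj_inr_inr {l m : L} : ¬ (gadget L).Adj (.inr l) (.inr m) :=
  id

/-- The reflection of the path, as an automorphism of the gadget. -/
def gadgetReflection (L : Type*) : gadget L ≃g gadget L where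
  toEquiv := Equiv.sumCongr Fin.revPerm (Equiv.refl L)
  map_rel_iff' := by
    rintro (x | l) (y | m)
    · simp only [Equiv.sumCongr_apply, Sum.map_inl, Fin.revPerm_apply, gadget_adj_inl_inl]
      decide +revert
    · simp only [Equiv.sumCongr_apply, Sum.map_inl, Sum.map_inr, Fin.revPerm_apply,
        gadget_adj_inl_inr]
      decide +revert
    · simp only [Equiv.sumCongr_apply, Sum.map_inl, Sum.map_inr, Fin.revPerm_apply,
        gadget_adj_inr_inl]
      decide +revert
    · exact Iff.rfl

lemma degree_gadget_le [Fintype L] (v : Fin 4 ⊕ L) : (gadget L).degree v ≤ Fintype.card L + 2 := by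
  rw [← SimpleGraph.card_neighborFinset_eq_degree, SimpleGraph.neighborFinset_eq_filter,
    card_filter, Fintype.sum_sum_type, Fin.sum_univ_four]
  rcases v with x | l
  · fin_cases x <;> simp +arith
  · simp

/-- The three mobile agents have type `0` (red) and the agents in `L` type `1` (blue). -/
def gadgetType : Fin 3 ⊕ L → Fin 2 :=
  Sum.elim (fun _ ↦ 0) (fun _ ↦ 1)

lemma gadgetType_surjective [Nonempty L] :
    Function.Surjective (gadgetType : Fin 3 ⊕ L → Fin 2) := by
  intro T
  fin_cases T
  · exact ⟨.inl 0, rfl⟩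
  · exact ⟨.inr (Classical.arbitrary L), rfl⟩

/-- The number of red neighbors of the red agent `j` when the red agents have positions `f`. -/
def redCount (f : Fin 3 → Fin 4) (j : Fin 3) : ℕ :=
  #{i | (f j).val + 1 = (f i).val ∨ (f i).val + 1 = (f j).val}

lemma posCount_gadget [Fintype L] (f : Fin 3 → Fin 4) (j : Fin 3) :
    posCount (gadget L) gadgetType (Sum.map f id) (.inl j) = redCount f j := by
  rw [posCount, card_filter, Fintype.sum_sum_type]
  simp [gadgetType, redCount]

lemma negCountOne_gadget [Fintype L] (f : Fin 3 → Fin 4) (j : Fin 3) :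
    negCountOne (gadget L) gadgetType (Sum.map f id) (.inl j) =
      if f j = 1 ∨ f j = 2 then Fintype.card L else 0 := by
  rw [negCountOne_eq_negCountAll, negCountAll, card_filter, Fintype.sum_sum_type]
  simp [gadgetType]

/-- The positions of the three red agents on the path, in the `i`-th placement of the cycle. -/
def redPosition : ℕ → Fin 3 → Fin 4
  | 0 => ![0, 2, 3]
  | 1 => ![1, 2, 3]
  | i + 2 => Fin.rev ∘ redPosition i ∘ (· + 1)

/-- The `i`-th placement of the cycle on the gadget, where the blue agents never move. -/
def gadgetPlacement (i : ℕ) : Fin 3 ⊕ L → Fin 4 ⊕ L :=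
  Sum.map (redPosition i) id

/-- The cyclic rotation of the red agents, which fixes the blue ones. -/
def redRotation (L : Type*) : Fin 3 ⊕ L ≃ Fin 3 ⊕ L :=
  Equiv.sumCongr (Equiv.addRight 1) (Equiv.refl L)

lemma gadgetType_comp_redRotation :
    (gadgetType : Fin 3 ⊕ L → Fin 2) ∘ redRotation L = gadgetType := by
  funext b
  rcases b with j | l <;> rfl

lemma gadgetPlacement_add_two (i : ℕ) :
    (gadgetPlacement (i + 2) : Fin 3 ⊕ L → Fin 4 ⊕ L) =
      gadgetReflection L ∘ gadgetPlacement i ∘ redRotation L := by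
  funext b
  rcases b with j | l <;> rfl

lemma improvingJump_gadgetPlacement_succ {c : (Fin 3 ⊕ L → Fin 4 ⊕ L) → Fin 3 ⊕ L → ℝ} {i : ℕ}
    {j : Fin 3} (hfree : ∀ b, redPosition i b ≠ redPosition (i + 1) j)
    (heq : ∀ b ≠ j, redPosition (i + 1) b = redPosition i b)
    (hlt : c (gadgetPlacement (i + 1)) (.inl j) < c (gadgetPlacement i) (.inl j)) :
    ImprovingJump c (gadgetPlacement i) (gadgetPlacement (i + 1)) := by
  refine improvingJump_of_forall_ne ?_ ?_ hlt
  · rintro (b | l)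
    · exact Sum.inl_injective.ne (hfree b)
    · exact Sum.inr_ne_inl
  · rintro (b | l) hb
    · exact congrArg Sum.inl (heq b (ne_of_apply_ne Sum.inl hb))
    · rfl

variable [Fintype L] {τ : ℝ}

lemma improvingJump_gadgetPlacement_zero (hτ : 0 < τ) :
    ImprovingJump (costOne (gadget L) gadgetType τ) (gadgetPlacement 0) (gadgetPlacement 1) := by
  have hbefore : positiveFraction (gadget L) gadgetType (gadgetPlacement 0) (.inl 0) = 0 := by
    have hred : redCount (redPosition 0) 0 = 0 := by decide
    simp [positiveFraction, gadgetPlacement, posCount_gadget, hred]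
  have hafter : 0 < positiveFraction (gadget L) gadgetType (gadgetPlacement 1) (.inl 0) := by
    have hred : redCount (redPosition 1) 0 = 1 := by decide
    rw [positiveFraction, gadgetPlacement, posCount_gadget, hred]
    positivity
  exact improvingJump_gadgetPlacement_succ (by decide) (by decide)
    (costOne_lt_costOne (hbefore.trans_lt hτ) (hbefore.trans_lt hafter))

lemma improvingJump_gadgetPlacement_one [Nonempty L] (hτ : 2 / (2 + Fintype.card L : ℝ) < τ) :
    ImprovingJump (costOne (gadget L) gadgetType τ) (gadgetPlacement 1) (gadgetPlacement 2) := by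
  have hbefore : positiveFraction (gadget L) gadgetType (gadgetPlacement 1) (.inl 1) =
      2 / (2 + Fintype.card L) := by
    have hred : redCount (redPosition 1) 1 = 2 := by decide
    have hmid : redPosition 1 1 = 2 := rfl
    simp [positiveFraction, gadgetPlacement, posCount_gadget, negCountOne_gadget, hred, hmid]
  have hafter : positiveFraction (gadget L) gadgetType (gadgetPlacement 2) (.inl 1) = 1 := by
    have hred : redCount (redPosition 2) 1 = 1 := by decide
    have hend : redPosition 2 1 = 0 := rfl
    simp [positiveFraction, gadgetPlacement, posCount_gadget, negCountOne_gadget, hred, hend]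
  have hlt : 2 / (2 + Fintype.card L : ℝ) < 1 := by
    have hcard : (0 : ℝ) < Fintype.card L := mod_cast Fintype.card_pos
    rw [div_lt_one (by positivity)]
    linarith
  exact improvingJump_gadgetPlacement_succ (by decide) (by decide)
    (costOne_lt_costOne (hbefore.trans_lt hτ) (by rwa [hbefore, hafter]))

lemma improvingJump_gadgetPlacement [Nonempty L] (hτ : 2 / (2 + Fintype.card L : ℝ) < τ) :
    ∀ i, ImprovingJump (costOne (gadget L) gadgetType τ) (gadgetPlacement i)
      (gadgetPlacement (i + 1))
  | 0 => improvingJump_gadgetPlacement_zero (hτ.trans' (by positivity))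
  | 1 => improvingJump_gadgetPlacement_one hτ
  | i + 2 => by
    rw [← gadgetType_comp_redRotation, gadgetPlacement_add_two,
      show i + 2 + 1 = i + 1 + 2 from rfl, gadgetPlacement_add_two]
    exact (improvingJump_gadgetPlacement hτ i).comp (gadgetReflection L).toEmbedding (redRotation L)

lemma isImprovingResponseCycle_gadgetPlacement [Nonempty L]
    (hτ : 2 / (2 + Fintype.card L : ℝ) < τ) :
    IsImprovingResponseCycle (costOne (gadget L) gadgetType τ) 12 gadgetPlacement := by
  have hinj : Function.Injective (redPosition 0) := by decide
  have hclosed : redPosition 12 = redPosition 0 := by decide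
  refine ⟨by norm_num, hinj.sumMap Function.injective_id, ?_,
    fun i _ ↦ improvingJump_gadgetPlacement hτ i⟩
  rw [gadgetPlacement, hclosed, gadgetPlacement]

end Gadget

theorem statement10_general (Δ : ℕ) (hΔ : 3 ≤ Δ) :
    ∃ (N M : ℕ) (G : SimpleGraph (Fin N)) (t : Fin M → Fin 2),
      IsRegular G Δ ∧ M < N ∧ Function.Surjective t ∧
      ∃ (ℓ : ℕ) (q : ℕ → Fin M → Fin N), ∀ τ : ℝ, 2 / (Δ : ℝ) < τ →
        IsImprovingResponseCycle (costOne G t τ) ℓ q := by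
  obtain ⟨d, rfl⟩ := Nat.exists_eq_add_of_le hΔ
  let L := Fin (d + 1)
  have hcard : 2 + Fintype.card L = 3 + d := by
    simp only [L, Fintype.card_fin]
    ring
  obtain ⟨N, H, hreg, ⟨φ⟩⟩ := exists_isRegular_embedding (gadget L) (Δ := 3 + d)
    fun v ↦ (degree_gadget_le v).trans (by omega)
  let e := (Fintype.equivFin (Fin 3 ⊕ L)).symm
  have hcycle (τ : ℝ) (hτ : 2 / ((3 + d : ℕ) : ℝ) < τ) :
      IsImprovingResponseCycle (costOne H (gadgetType ∘ e) τ) 12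
        (fun i ↦ φ ∘ gadgetPlacement i ∘ e) :=
    (isImprovingResponseCycle_gadgetPlacement (by rw [← hcard] at hτ; exact_mod_cast hτ)).comp φ e
  have hlt := (hcycle _ (lt_add_one _)).card_lt
  rw [Fintype.card_fin, Fintype.card_fin] at hlt
  exact ⟨N, _, H, gadgetType ∘ e, hreg, hlt, gadgetType_surjective.comp e.surjective, 12, _, hcycle⟩

/-- For every `Δ ≥ 3` and every `2/Δ < τ < 1` there are a `Δ`-regular graph, two
surjectively used agent types on `|A| < |V|` agents and an improving response cycle for
the `1`-`1`-JSG with parameter `τ`. -/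
theorem statement10 (Δ : ℕ) (hΔ : 3 ≤ Δ) (τ : ℝ) (hτ1 : 2 / (Δ : ℝ) < τ) (hτ2 : τ < 1) :
    ∃ (N M : ℕ) (G : SimpleGraph (Fin N)) (t : Fin M → Fin 2),
      IsRegular G Δ ∧ M < N ∧ Function.Surjective t ∧
      ∃ (ℓ : ℕ) (q : ℕ → Fin M → Fin N), 1 ≤ ℓ ∧ Function.Injective (q 0) ∧ q ℓ = q 0 ∧
        ∀ i < ℓ, ImprovingJump (costOne G t τ) (q i) (q (i + 1)) := by
  obtain ⟨N, M, G, t, hreg, hlt, hsurj, ℓ, q, hcycle⟩ := statement10_general Δ hΔ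
  exact ⟨N, M, G, t, hreg, hlt, hsurj, ℓ, q, hcycle τ hτ1⟩

end Schelling
end
end

section
/- For every intolerance parameter τ ∈ (0,1), there exist a finite simple graph G = (V,E), a set A of agents with |A| < |V| partitioned into three types, and an injective placement p₀ : A → V such that no finite sequence of improving jumps of the one-versus-one jump Schelling game (1-1-JSG) with parameter τ starting from p₀ ends in a jump-stable placement; in particular, the 1-1-JSG is not weakly acyclic on arbitrary networks for any τ ∈ (0,1). -/
open Finset
open scoped Classical

noncomputable section

namespace Schelling

variable {V A : Type*} [Fintype V] [Fintype A] {k : ℕ}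

/-!
Four sites, two hubs with one leaf each, are shared by three movers of type `0`, so exactly one site
is free. Everyone else stays put: an anchor of type `0` adjacent to both hubs, and a clique of
agents of type `2` (the crowd) also adjacent to both hubs, so large that its members are always
content and a mover at a hub is always discontent.

If a leaf is free, then both hubs are occupied, and the mover at the opposite hub gains by jumping
to that leaf, where its only neighbor is another mover. If a hub is free, the mover at its leaf has
no neighbors at all and gains by jumping to the hub, next to the anchor. In both cases the movers
still occupy three of the four sites, so the game never ends. The type `1` is that of a single
isolated agent, which costs `τ` wherever it goes.
-/

section Costs

omit [Fintype V]

variable {G : SimpleGraph V} {t : A → Fin k} {τ : ℝ} {p : A → V} {a : A}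

/-- The number of neighbors of agent `a` under placement `p` whose type is `T`; both `|N⁺_p(a)|`
and `|N⁻_p(a)|` are built from it. -/
def typeCount (G : SimpleGraph V) (t : A → Fin k) (p : A → V) (a : A) (T : Fin k) : ℕ :=
  #{b | G.Adj (p a) (p b) ∧ t b = T}

theorem posCount_eq_typeCount : posCount G t p a = typeCount G t p a (t a) := rfl

theorem typeCount_le_negCountOne {T : Fin k} (hT : T ≠ t a) :
    typeCount G t p a T ≤ negCountOne G t p a :=
  Finset.le_sup (f := typeCount G t p a) (by simpa using hT)

theorem negCountOne_le_iff {n : ℕ} :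
    negCountOne G t p a ≤ n ↔ ∀ T, T ≠ t a → typeCount G t p a T ≤ n := by
  simp [negCountOne, typeCount]

theorem negCountOne_eq_zero_iff :
    negCountOne G t p a = 0 ↔ ∀ b, G.Adj (p a) (p b) → t b = t a := by
  rw [← Nat.le_zero, negCountOne_le_iff]
  simp only [typeCount, Nat.le_zero, Finset.card_eq_zero, Finset.filter_eq_empty_iff]
  grind

theorem posCount_pos_iff : 0 < posCount G t p a ↔ ∃ b, G.Adj (p a) (p b) ∧ t b = t a := by
  simp [posCount, Finset.card_pos, Finset.filter_nonempty_iff]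

theorem posCount_eq_zero_of_nbrs_eq_empty (h : nbrs G p a = ∅) : posCount G t p a = 0 := by
  simp only [nbrs, Finset.filter_eq_empty_iff] at h
  simp only [posCount, Finset.card_eq_zero, Finset.filter_eq_empty_iff]
  exact fun b hb hab => h hb hab.1

theorem costOne_nonneg (hτ : 0 ≤ τ) : 0 ≤ costOne G t τ p a := by
  unfold costOne
  split_ifs
  exacts [hτ, le_max_left _ _]

theorem costOne_le (hτ : 0 ≤ τ) : costOne G t τ p a ≤ τ := by
  unfold costOne
  split_ifs
  · exact le_rfl
  · exact max_le hτ (sub_le_self _ (by positivity))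

theorem costOne_lt_iff (hτ : 0 < τ) :
    costOne G t τ p a < τ ↔ ∃ b, G.Adj (p a) (p b) ∧ t b = t a := by
  rw [← posCount_pos_iff, costOne]
  split_ifs with hnbrs
  · simp [posCount_eq_zero_of_nbrs_eq_empty hnbrs]
  rcases Nat.eq_zero_or_pos (posCount G t p a) with hpos | hpos
  · simp [hpos]
  · have : (0 : ℝ) < posCount G t p a / (posCount G t p a + negCountOne G t p a) := by positivity
    simp [hτ, hpos, this]

theorem costOne_eq_zero_iff (hτ : 0 < τ) :
    costOne G t τ p a = 0 ↔
      0 < posCount G t p a ∧ τ * negCountOne G t p a ≤ (1 - τ) * posCount G t p a := by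
  unfold costOne
  split_ifs with hnbrs
  · simp [posCount_eq_zero_of_nbrs_eq_empty hnbrs, hτ.ne']
  rcases Nat.eq_zero_or_pos (posCount G t p a) with hpos | hpos
  · simp [hpos, hτ]
  · rw [max_eq_left_iff, sub_nonpos, le_div_iff₀ (by positivity)]
    constructor
    · exact fun h => ⟨hpos, by linarith⟩
    · exact fun h => by linarith [h.2]

theorem costOne_eq_zero_of_forall_adj_eq (hτ0 : 0 < τ) (hτ1 : τ ≤ 1)
    (hex : ∃ b, G.Adj (p a) (p b) ∧ t b = t a) (hall : ∀ b, G.Adj (p a) (p b) → t b = t a) :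
    costOne G t τ p a = 0 := by
  refine (costOne_eq_zero_iff hτ0).2 ⟨posCount_pos_iff.2 hex, ?_⟩
  rw [negCountOne_eq_zero_iff.2 hall, Nat.cast_zero, mul_zero]
  exact mul_nonneg (sub_nonneg.2 hτ1) (Nat.cast_nonneg _)

end Costs

section Jumps

omit [Fintype V] [Fintype A]

variable {c : (A → V) → A → ℝ}

theorem not_reachesStableJump_of_invariant {p₀ : A → V} (I : (A → V) → Prop) (h₀ : I p₀)
    (hstep : ∀ p q, I p → ImprovingJump c p q → I q) (hunstable : ∀ p, I p → ¬ JumpStable c p) :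
    ¬ ReachesStableJump c p₀ := by
  rintro ⟨n, q, rfl, hjump, hstable⟩
  have hI : ∀ i ≤ n, I (q i) := by
    intro i
    induction i with
    | zero => exact fun _ => h₀
    | succ i ih => exact fun hi => hstep _ _ (ih (by lia)) (hjump i hi)
  exact hunstable _ (hI n le_rfl) hstable

end Jumps

section Relabeling

omit [Fintype V] [Fintype A]

variable {V' A' : Type*} {c : (A → V) → A → ℝ} {c' : (A' → V') → A' → ℝ}
  (e : V' ≃ V) (f : A' ≃ A)

theorem jumpMove_arrowCongr_iff (hc : ∀ p a, c' p a = c (f.arrowCongr e p) (f a))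
    (p q : A' → V') (a : A') (v : V') :
    JumpMove c' p q a v ↔ JumpMove c (f.arrowCongr e p) (f.arrowCongr e q) (f a) (e v) := by
  have hfree : (∀ b, p b ≠ v) ↔ ∀ b, f.arrowCongr e p b ≠ e v := by simp [f.forall_congr_left]
  have hupdate : f.arrowCongr e (Function.update p a v) =
      Function.update (f.arrowCongr e p) (f a) (e v) := by
    ext b
    by_cases hb : f.symm b = a <;> grind [Function.update_apply]
  rw [JumpMove, JumpMove, hfree, hc, hc, ← hupdate, (f.arrowCongr e).apply_eq_iff_eq]

theorem ReachesStableJump.arrowCongr (hc : ∀ p a, c' p a = c (f.arrowCongr e p) (f a))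
    {p₀ : A' → V'} (h : ReachesStableJump c' p₀) : ReachesStableJump c (f.arrowCongr e p₀) := by
  have hjump (p q : A' → V') :
      ImprovingJump c' p q ↔ ImprovingJump c (f.arrowCongr e p) (f.arrowCongr e q) :=
    f.exists_congr fun a => e.exists_congr fun v => jumpMove_arrowCongr_iff e f hc p q a v
  obtain ⟨n, q, rfl, hq, hstable⟩ := h
  refine ⟨n, fun i => f.arrowCongr e (q i), rfl, fun i hi => (hjump _ _).1 (hq i hi), ?_⟩
  rw [JumpStable, (f.arrowCongr e).surjective.forall]
  exact fun r hr => hstable r ((hjump _ _).2 hr)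

theorem costOne_comap [Fintype A] [Fintype A'] (G : SimpleGraph V) (t : A → Fin k) (τ : ℝ)
    (p : A' → V') (a : A') :
    costOne (G.comap e) (t ∘ f) τ p a = costOne G t τ (f.arrowCongr e p) (f a) := by
  have htypeCount (T : Fin k) :
      typeCount (G.comap e) (t ∘ f) p a T = typeCount G t (f.arrowCongr e p) (f a) T :=
    Finset.card_equiv f (by simp)
  have hpos : posCount (G.comap e) (t ∘ f) p a = posCount G t (f.arrowCongr e p) (f a) :=
    htypeCount _
  have hneg : negCountOne (G.comap e) (t ∘ f) p a = negCountOne G t (f.arrowCongr e p) (f a) :=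
    Finset.sup_congr rfl fun T _ => htypeCount T
  have hnbrs : nbrs (G.comap e) p a = ∅ ↔ nbrs G (f.arrowCongr e p) (f a) = ∅ := by
    simp [nbrs, Finset.filter_eq_empty_iff, f.forall_congr_left]
  simp only [costOne, hpos, hneg, hnbrs]

end Relabeling

section Residents

theorem existsUnique_forall_ne_of_injective {M S : Type*} [Fintype M] [Fintype S] {s : M → S}
    (hs : s.Injective) (hcard : Fintype.card S = Fintype.card M + 1) : ∃! x, ∀ m, s m ≠ x := by
  have hcompl : #(univ.image s)ᶜ = 1 := by
    rw [Finset.card_compl, Finset.card_image_of_injective _ hs, Finset.card_univ]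
    lia
  simpa using (Finset.singleton_iff_unique_mem _).1 (Finset.card_eq_one.1 hcompl)

variable {M S R : Type*} {c : (M ⊕ R → S ⊕ R) → M ⊕ R → ℝ} {s : M → S}

theorem jumpMove_sumMap_id_iff {q : M ⊕ R → S ⊕ R} {m : M} {x : S} :
    JumpMove c (Sum.map s id) q (.inl m) (.inl x) ↔
      (∀ n, s n ≠ x) ∧ q = Sum.map (Function.update s m x) id ∧
        c q (.inl m) < c (Sum.map s id) (.inl m) := by
  have hupdate {_ : DecidableEq (M ⊕ R)} : Function.update (Sum.map s id : M ⊕ R → S ⊕ R) (.inl m)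
      (.inl x) = Sum.map (Function.update s m x) id := by
    ext (n | r)
    · by_cases h : n = m <;> simp [h]
    · simp
  simp [JumpMove, hupdate]

theorem not_jumpStable_sumMap_id {m : M} {x : S} (hx : ∀ n, s n ≠ x)
    (h : c (Sum.map (Function.update s m x) id) (.inl m) < c (Sum.map s id) (.inl m)) :
    ¬ JumpStable c (Sum.map s id) :=
  fun hstable => hstable _ ⟨.inl m, .inl x, jumpMove_sumMap_id_iff.2 ⟨hx, rfl, h⟩⟩

theorem injective_update_of_forall_ne (hs : s.Injective) {m : M} {x : S} (hx : ∀ n, s n ≠ x) :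
    (Function.update s m x).Injective := by
  intro i j hij
  grind [Function.Injective, Function.update_apply]

theorem ImprovingJump.exists_eq_sumMap_id (hs : s.Injective)
    (hresident : ∀ r q, c (Sum.map s id) (.inr r) ≤ c q (.inr r)) {q : M ⊕ R → S ⊕ R}
    (h : ImprovingJump c (Sum.map s id) q) : ∃ s' : M → S, s'.Injective ∧ q = Sum.map s' id := by
  obtain ⟨a, v, hjump⟩ := h
  rcases v with x | r
  · rcases a with m | r
    · obtain ⟨hx, rfl, -⟩ := jumpMove_sumMap_id_iff.1 hjump
      exact ⟨_, injective_update_of_forall_ne hs hx, rfl⟩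
    · exact absurd hjump.2.2 (hresident r q).not_gt
  · exact absurd rfl (hjump.1 (.inr r))

end Residents

/-- The four nodes among which the three movers circulate: leaf `i` hangs off hub `i`. -/
inductive Site
  | leaf (i : Bool)
  | hub (i : Bool)
  deriving Fintype

theorem card_site : Fintype.card Site = 4 := rfl

/-- The agents that never move, the crowd being indexed by `ι`. Each of them stays on a node of
its own, to which we give the same name. -/
inductive Resident (ι : Type*)
  | anchor
  | loner
  | crowd (j : ι)
  deriving Fintype

/-- The nodes of the network. -/
abbrev Node (ι : Type*) := Site ⊕ Resident ι

/-- The agents of the game: three movers, indexed by `Fin 3`, and the residents. -/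
abbrev Agent (ι : Type*) := Fin 3 ⊕ Resident ι

section Network

open Site Resident

/-- The network: each hub is adjacent to its leaf, to the anchor's node and to the whole crowd,
and the crowd is a clique; the loner's node is isolated. -/
def network (ι : Type*) : SimpleGraph (Node ι) :=
  .fromRel fun
    | .inl (leaf i), .inl (hub j) => i = j
    | .inl (hub _), .inr anchor => True
    | .inl (hub _), .inr (crowd _) => True
    | .inr (crowd _), .inr (crowd _) => True
    | _, _ => False

/-- The types of the agents: `0` for the movers and the anchor, `1` for the loner, `2` for the
crowd. -/
def agentType {ι : Type*} : Agent ι → Fin 3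
  | .inl _ => 0
  | .inr anchor => 0
  | .inr loner => 1
  | .inr (crowd _) => 2

/-- The placement with the movers on the sites given by `s` and every resident at home. -/
abbrev placement (ι : Type*) (s : Fin 3 → Site) : Agent ι → Node ι := Sum.map s id

variable {ι : Type*} {i : Bool} {j j' : ι}

theorem network_adj_leaf_iff {v : Node ι} :
    (network ι).Adj (.inl (leaf i)) v ↔ v = .inl (hub i) := by
  rcases v with (_ | _) | (_ | _ | _) <;> simp [network, eq_comm]

theorem network_adj_anchor_iff {v : Node ι} :
    (network ι).Adj (.inr anchor) v ↔ ∃ i, v = .inl (hub i) := by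
  rcases v with (_ | _) | (_ | _ | _) <;> simp [network]

theorem network_adj_hub_crowd : (network ι).Adj (.inl (hub i)) (.inr (crowd j)) := by
  simp [network]

theorem network_adj_crowd_crowd_iff :
    (network ι).Adj (.inr (crowd j)) (.inr (crowd j')) ↔ j ≠ j' := by
  simp [network]

theorem agentType_surjective [Nonempty ι] : (agentType (ι := ι)).Surjective := by
  intro T
  fin_cases T
  exacts [⟨.inr anchor, rfl⟩, ⟨.inr loner, rfl⟩, ⟨.inr (crowd (Classical.arbitrary ι)), rfl⟩]

theorem agentType_eq_one_iff {a : Agent ι} : agentType a = 1 ↔ a = .inr loner := by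
  rcases a with _ | (_ | _ | _) <;> simp [agentType]

theorem agentType_eq_zero_of_placement_eq_inl {s : Fin 3 → Site} {a : Agent ι} {x : Site}
    (h : placement ι s a = .inl x) : agentType a = 0 := by
  rcases a with _ | r
  · rfl
  · simp at h

end Network

section Game

open Site Resident

variable {ι : Type*} [Fintype ι] {τ : ℝ} {s : Fin 3 → Site}

theorem typeCount_le_five {p : Agent ι → Node ι} {a : Agent ι} {T : Fin 3} (hT : T ≠ 2) :
    typeCount (network ι) agentType p a T ≤ 5 := by
  have hsub : ({b | (network ι).Adj (p a) (p b) ∧ agentType b = T} : Finset (Agent ι)) ⊆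
      {.inl 0, .inl 1, .inl 2, .inr anchor, .inr loner} := by
    rintro (m | _ | _ | j) hb
    · fin_cases m <;> simp
    · simp
    · simp
    · exact absurd (Finset.mem_filter.1 hb).2.2.symm hT
  exact (Finset.card_le_card hsub).trans Finset.card_le_five

theorem card_le_typeCount_two {p : Agent ι → Node ι} {a : Agent ι} {J : Finset ι}
    (hJ : ∀ j ∈ J, (network ι).Adj (p a) (p (.inr (crowd j)))) :
    #J ≤ typeCount (network ι) agentType p a 2 :=
  Finset.card_le_card_of_injOn (fun j => .inr (crowd j))
    (fun j hj => Finset.mem_filter.2 ⟨Finset.mem_univ _, hJ j hj, rfl⟩)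
    (fun i _ j _ h => by simpa using h)

theorem costOne_eq_zero_of_forall_adj_site (hτ0 : 0 < τ) (hτ1 : τ ≤ 1) {a : Agent ι}
    (ha : agentType a = 0) (hadj : ∀ v, (network ι).Adj (placement ι s a) v → ∃ x, v = .inl x)
    {m : Fin 3} (hm : (network ι).Adj (placement ι s a) (.inl (s m))) :
    costOne (network ι) agentType τ (placement ι s) a = 0 := by
  refine costOne_eq_zero_of_forall_adj_eq hτ0 hτ1 ⟨.inl m, hm, ha.symm⟩ fun b hb => ?_
  obtain ⟨x, hx⟩ := hadj _ hb
  rw [agentType_eq_zero_of_placement_eq_inl hx, ha]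

theorem existsUnique_free_site (hs : s.Injective) : ∃! x, ∀ m, s m ≠ x :=
  existsUnique_forall_ne_of_injective hs (by rw [card_site, Fintype.card_fin])

theorem exists_mover_of_free_ne {x y : Site} (hs : s.Injective) (hx : ∀ m, s m ≠ x) (hxy : x ≠ y) :
    ∃ m, s m = y := by
  by_contra! hy
  exact hxy ((existsUnique_free_site hs).unique hx hy)

theorem exists_mover_at_hub (hs : s.Injective) : ∃ m i, s m = hub i := by
  by_contra! h
  have hhubs : hub true = hub false := (existsUnique_free_site hs).unique (h · true) (h · false)
  simp at hhubs

theorem costOne_anchor_eq_zero (hτ0 : 0 < τ) (hτ1 : τ ≤ 1) (hs : s.Injective) :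
    costOne (network ι) agentType τ (placement ι s) (.inr anchor) = 0 := by
  obtain ⟨m, i, hm⟩ := exists_mover_at_hub hs
  refine costOne_eq_zero_of_forall_adj_site (m := m) hτ0 hτ1 rfl ?_
    (network_adj_anchor_iff.2 ⟨i, congrArg _ hm⟩)
  intro v hv
  obtain ⟨i, rfl⟩ := network_adj_anchor_iff.1 hv
  exact ⟨hub i, rfl⟩

theorem costOne_loner_eq (hτ : 0 < τ) (p : Agent ι → Node ι) :
    costOne (network ι) agentType τ p (.inr loner) = τ := by
  refine (costOne_le hτ.le).antisymm (not_lt.1 fun hlt => ?_)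
  obtain ⟨b, hadj, hb⟩ := (costOne_lt_iff hτ).1 hlt
  obtain rfl := agentType_eq_one_iff.1 hb
  exact hadj.ne rfl

theorem costOne_crowd_eq_zero (hτ : 0 < τ) (hτ1 : τ ≤ 1)
    (hι : τ * 5 ≤ (1 - τ) * (Fintype.card ι - 1)) (j : ι) :
    costOne (network ι) agentType τ (placement ι s) (.inr (crowd j)) = 0 := by
  have hpos : Fintype.card ι - 1 ≤
      posCount (network ι) agentType (placement ι s) (.inr (crowd j)) := by
    rw [posCount_eq_typeCount, ← Finset.card_univ,
      ← Finset.card_erase_of_mem (Finset.mem_univ j)]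
    exact card_le_typeCount_two fun i hi =>
      network_adj_crowd_crowd_iff.2 (Finset.ne_of_mem_erase hi).symm
  have hneg : negCountOne (network ι) agentType (placement ι s) (.inr (crowd j)) ≤ 5 :=
    negCountOne_le_iff.2 fun T hT => typeCount_le_five hT
  have hcard : 1 < Fintype.card ι := by
    have : (0 : ℝ) < Fintype.card ι - 1 :=
      pos_of_mul_pos_right ((by positivity : 0 < τ * 5).trans_le hι) (sub_nonneg.2 hτ1)
    exact_mod_cast sub_pos.1 this
  rw [← Nat.cast_pred (by lia)] at hι
  refine (costOne_eq_zero_iff hτ).2 ⟨by lia, ?_⟩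
  calc τ * negCountOne (network ι) agentType (placement ι s) (.inr (crowd j))
    _ ≤ τ * 5 := by gcongr; exact_mod_cast hneg
    _ ≤ (1 - τ) * (Fintype.card ι - 1 : ℕ) := hι
    _ ≤ _ := mul_le_mul_of_nonneg_left (Nat.cast_le.2 hpos) (sub_nonneg.2 hτ1)

theorem costOne_placement_resident_le (hτ0 : 0 < τ) (hτ1 : τ ≤ 1)
    (hι : τ * 5 ≤ (1 - τ) * (Fintype.card ι - 1)) (hs : s.Injective) (r : Resident ι)
    (q : Agent ι → Node ι) :
    costOne (network ι) agentType τ (placement ι s) (.inr r) ≤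
      costOne (network ι) agentType τ q (.inr r) := by
  rcases r with _ | _ | j
  · exact (costOne_anchor_eq_zero hτ0 hτ1 hs).trans_le (costOne_nonneg hτ0.le)
  · rw [costOne_loner_eq hτ0, costOne_loner_eq hτ0]
  · exact (costOne_crowd_eq_zero hτ0 hτ1 hι j).trans_le (costOne_nonneg hτ0.le)

theorem costOne_mover_at_hub_pos (hτ0 : 0 < τ) (hτ1 : τ ≤ 1)
    (hι : (1 - τ) * 5 < τ * Fintype.card ι) {m : Fin 3} {i : Bool} (hm : s m = hub i) :
    0 < costOne (network ι) agentType τ (placement ι s) (.inl m) := by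
  have hpos : posCount (network ι) agentType (placement ι s) (.inl m) ≤ 5 :=
    posCount_eq_typeCount.trans_le (typeCount_le_five (by simp [agentType]))
  have hneg : Fintype.card ι ≤ negCountOne (network ι) agentType (placement ι s) (.inl m) := by
    refine (card_le_typeCount_two (J := univ) fun j _ => ?_).trans
      (typeCount_le_negCountOne (by simp [agentType]))
    simpa [hm] using network_adj_hub_crowd
  refine (costOne_nonneg hτ0.le).lt_of_ne' fun hzero => hι.not_ge ?_
  calc τ * Fintype.card ι
    _ ≤ τ * negCountOne (network ι) agentType (placement ι s) (.inl m) := by gcongr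
    _ ≤ (1 - τ) * posCount (network ι) agentType (placement ι s) (.inl m) :=
      ((costOne_eq_zero_iff hτ0).1 hzero).2
    _ ≤ (1 - τ) * 5 := mul_le_mul_of_nonneg_left (by exact_mod_cast hpos) (sub_nonneg.2 hτ1)

theorem costOne_mover_at_hub_lt (hτ : 0 < τ) {m : Fin 3} {i : Bool} (hm : s m = hub i) :
    costOne (network ι) agentType τ (placement ι s) (.inl m) < τ := by
  refine (costOne_lt_iff hτ).2 ⟨.inr anchor, (network_adj_anchor_iff.2 ⟨i, ?_⟩).symm, rfl⟩
  simp [hm]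

theorem costOne_mover_at_leaf_eq_zero (hτ0 : 0 < τ) (hτ1 : τ ≤ 1) {m n : Fin 3} {i : Bool}
    (hm : s m = leaf i) (hn : s n = hub i) :
    costOne (network ι) agentType τ (placement ι s) (.inl m) = 0 := by
  have hadj (v : Node ι) :
      (network ι).Adj (placement ι s (.inl m)) v ↔ v = .inl (hub i) := by
    simp [hm, network_adj_leaf_iff]
  exact costOne_eq_zero_of_forall_adj_site hτ0 hτ1 rfl (fun v hv => ⟨hub i, (hadj v).1 hv⟩)
    ((hadj _).2 (congrArg _ hn))

theorem le_costOne_mover_at_leaf (hτ : 0 < τ) {m : Fin 3} {i : Bool} (hm : s m = leaf i)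
    (hfree : ∀ n, s n ≠ hub i) :
    τ ≤ costOne (network ι) agentType τ (placement ι s) (.inl m) := by
  refine not_lt.1 fun hlt => ?_
  obtain ⟨b, hadj, -⟩ := (costOne_lt_iff hτ).1 hlt
  simp only [placement, Sum.map_inl, hm, network_adj_leaf_iff] at hadj
  rcases b with n | r
  · exact hfree n (by simpa using hadj)
  · simp at hadj

theorem placement_not_jumpStable (hτ0 : 0 < τ) (hτ1 : τ ≤ 1)
    (hι : (1 - τ) * 5 < τ * Fintype.card ι) (hs : s.Injective) :
    ¬ JumpStable (costOne (network ι) agentType τ) (placement ι s) := by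
  obtain ⟨x, hx, -⟩ := existsUnique_free_site hs
  rcases x with i | i
  · obtain ⟨m, hm⟩ : ∃ m, s m = hub !i := exists_mover_of_free_ne hs hx (by simp)
    obtain ⟨n, hn⟩ : ∃ n, s n = hub i := exists_mover_of_free_ne hs hx (by simp)
    have hnm : n ≠ m := by
      rintro rfl
      simp [hn] at hm
    refine not_jumpStable_sumMap_id (m := m) hx ?_
    rw [costOne_mover_at_leaf_eq_zero (i := i) (n := n) hτ0 hτ1 (by simp) (by simp [hnm, hn])]
    exact costOne_mover_at_hub_pos hτ0 hτ1 hι hm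
  · obtain ⟨m, hm⟩ : ∃ m, s m = leaf i := exists_mover_of_free_ne hs hx (by simp)
    refine not_jumpStable_sumMap_id (m := m) hx ?_
    exact (costOne_mover_at_hub_lt (i := i) hτ0 (by simp)).trans_le
      (le_costOne_mover_at_leaf hτ0 hm hx)

theorem placement_not_reachesStableJump (hτ0 : 0 < τ) (hτ1 : τ ≤ 1)
    (hcontent : τ * 5 ≤ (1 - τ) * (Fintype.card ι - 1))
    (hdiscontent : (1 - τ) * 5 < τ * Fintype.card ι) (hs : s.Injective) :
    ¬ ReachesStableJump (costOne (network ι) agentType τ) (placement ι s) := by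
  refine not_reachesStableJump_of_invariant
    (fun p => ∃ s : Fin 3 → Site, s.Injective ∧ p = placement ι s) ⟨s, hs, rfl⟩ ?_ ?_
  · rintro _ q ⟨s, hs, rfl⟩ hjump
    exact hjump.exists_eq_sumMap_id hs (costOne_placement_resident_le hτ0 hτ1 hcontent hs)
  · rintro _ ⟨s, hs, rfl⟩
    exact placement_not_jumpStable hτ0 hτ1 hdiscontent hs

end Game

theorem exists_crowd_size {τ : ℝ} (hτ0 : 0 < τ) (hτ1 : τ < 1) :
    ∃ K : ℕ, 0 < K ∧ τ * 5 ≤ (1 - τ) * (K - 1) ∧ (1 - τ) * 5 < τ * K := by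
  have hτ : 0 < 1 - τ := sub_pos.2 hτ1
  obtain ⟨K, hK⟩ := exists_nat_gt (max (τ * 5 / (1 - τ) + 1) ((1 - τ) * 5 / τ))
  obtain ⟨hcontent, hdiscontent⟩ := max_lt_iff.1 hK
  refine ⟨K, ?_, ?_, ?_⟩
  · exact Nat.cast_pos.1 (hdiscontent.trans' (by positivity))
  · exact (div_le_iff₀' hτ).1 (lt_sub_iff_add_lt.2 hcontent).le
  · exact (div_lt_iff₀' hτ0).1 hdiscontent

/-- For every `τ ∈ (0,1)` there are a graph, three surjectively used agent types on
`|A| < |V|` agents and an injective placement `p₀` from which no finite sequence of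
improving jumps of the `1`-`1`-JSG reaches a jump-stable placement, i.e., the
`1`-`1`-JSG is not weakly acyclic on arbitrary networks. -/
theorem statement11 (τ : ℝ) (hτ0 : 0 < τ) (hτ1 : τ < 1) :
    ∃ (N M : ℕ) (G : SimpleGraph (Fin N)) (t : Fin M → Fin 3) (p₀ : Fin M → Fin N),
      M < N ∧ Function.Surjective t ∧ Function.Injective p₀ ∧
      ¬ ReachesStableJump (costOne G t τ) p₀ := by
  obtain ⟨K, hK, hcontent, hdiscontent⟩ := exists_crowd_size hτ0 hτ1
  have : NeZero K := ⟨hK.ne'⟩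
  obtain ⟨s⟩ : Nonempty (Fin 3 ↪ Site) :=
    Function.Embedding.nonempty_of_card_le (by simp [card_site])
  let e := (Fintype.equivFin (Node (Fin K))).symm
  let f := (Fintype.equivFin (Agent (Fin K))).symm
  refine ⟨_, _, (network (Fin K)).comap e, agentType ∘ f, (f.arrowCongr e).symm (placement _ s),
    ?_, agentType_surjective.comp f.surjective, ?_, fun hreach => ?_⟩
  · simp [card_site]
  · exact e.symm.injective.comp ((s.injective.sumMap Function.injective_id).comp f.injective)
  · have hreach' := hreach.arrowCongr e f (costOne_comap e f _ _ τ)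
    rw [Equiv.apply_symm_apply] at hreach'
    exact placement_not_reachesStableJump hτ0 hτ1.le (by simpa using hcontent)
      (by simpa using hdiscontent) s.injective hreach'

end Schelling
end
end
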